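/- Let n ∈ ℕ, p⃗, q⃗ ∈ [1,∞]^n and α⃗ ∈ ℝⁿ. Then a measurable f : ℝⁿ → ℂ belongs to the associate space [Ė^{α⃗,p⃗}_{q⃗}(ℝⁿ)]' if and only if f ∈ Ė^{-α⃗,p⃗'}_{q⃗'}(ℝⁿ), and moreover ‖f‖_{[Ė^{α⃗,p⃗}_{q⃗}(ℝⁿ)]'} = ‖f‖_{Ė^{-α⃗,p⃗'}_{q⃗'}(ℝⁿ)}. -/

import Mathlib

open MeasureTheory ENNReal Filter

noncomputable section

/-- The dyadic annulus `R_k = (-2^k, 2^k) \ (-2^(k-1), 2^(k-1))` in `ℝ`. -/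
def herzRing (k : ℤ) : Set ℝ :=
  Set.Ioo (-(2 : ℝ) ^ k) ((2 : ℝ) ^ k) \ Set.Ioo (-(2 : ℝ) ^ (k - 1)) ((2 : ℝ) ^ (k - 1))

/-- The `L^q` "norm" (valued in `ℝ≥0∞`) of an `ℝ≥0∞`-valued function on a set `s ⊆ ℝ`,
with the usual modification when `q = ∞`. -/
def lqNormOn (q : ℝ≥0∞) (s : Set ℝ) (g : ℝ → ℝ≥0∞) : ℝ≥0∞ :=
  if q = ∞ then essSup (s.indicator g) volume
  else (∫⁻ x in s, g x ^ q.toReal) ^ (1 / q.toReal)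

/-- The `l^p` norm over `ℤ` of an `ℝ≥0∞`-valued sequence, with the usual modification
when `p = ∞`. -/
def lpZNorm (p : ℝ≥0∞) (a : ℤ → ℝ≥0∞) : ℝ≥0∞ :=
  if p = ∞ then ⨆ k, a k
  else (∑' k : ℤ, a k ^ p.toReal) ^ (1 / p.toReal)

/-- The one-dimensional Herz norm `K^{α,p}_q` of an `ℝ≥0∞`-valued function on `ℝ`. -/
def herzNorm1 (α : ℝ) (p q : ℝ≥0∞) (g : ℝ → ℝ≥0∞) : ℝ≥0∞ :=
  lpZNorm p fun k => ENNReal.ofReal ((2 : ℝ) ^ ((k : ℝ) * α)) * lqNormOn q (herzRing k) g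

/-- The mixed-norm Herz norm on `ℝⁿ` of an `ℝ≥0∞`-valued function: the Herz norm
`K^{α_1,p_1}_{q_1}` is applied in the first variable, then `K^{α_2,p_2}_{q_2}` in the
second variable, …, and finally `K^{α_n,p_n}_{q_n}` in the last variable. -/
def mixedHerzNormE : (n : ℕ) → (Fin n → ℝ) → (Fin n → ℝ≥0∞) → (Fin n → ℝ≥0∞) →
    ((Fin n → ℝ) → ℝ≥0∞) → ℝ≥0∞
  | 0, _, _, _, f => f fun i => i.elim0
  | n + 1, α, p, q, f =>
    herzNorm1 (α (Fin.last n)) (p (Fin.last n)) (q (Fin.last n)) fun xlast =>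
      mixedHerzNormE n (Fin.init α) (Fin.init p) (Fin.init q) fun y => f (Fin.snoc y xlast)

/-- The mixed-norm Herz norm `‖f‖_{Ė^{α,p}_q(ℝⁿ)}` of a complex-valued function on `ℝⁿ`. -/
def herzNormC (n : ℕ) (α : Fin n → ℝ) (p q : Fin n → ℝ≥0∞) (f : (Fin n → ℝ) → ℂ) : ℝ≥0∞ :=
  mixedHerzNormE n α p q fun x => (‖f x‖₊ : ℝ≥0∞)

/-- `I_m = (-2^m, -2^{-m}] ∪ [2^{-m}, 2^m)`. -/
def herzI (m : ℕ) : Set ℝ :=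
  Set.Ioc (-(2 : ℝ) ^ (m : ℤ)) (-(2 : ℝ) ^ (-(m : ℤ))) ∪
    Set.Ico ((2 : ℝ) ^ (-(m : ℤ))) ((2 : ℝ) ^ (m : ℤ))

/-- `A_m = I_m^n ⊆ ℝⁿ`. -/
def herzA (n m : ℕ) : Set (Fin n → ℝ) := Set.univ.pi fun _ => herzI m

/-- The class `H(ℝⁿ)` of simple functions built from finitely many pairwise disjoint
parallelepipeds contained in some `A_m`. -/
def IsHSimple (n : ℕ) (f : (Fin n → ℝ) → ℂ) : Prop :=
  ∃ (m N : ℕ) (a : Fin N → ℂ) (E : Fin N → Fin n → Set ℝ),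
    (∀ k i, MeasurableSet (E k i)) ∧
    (∀ k, Set.univ.pi (E k) ⊆ herzA n m) ∧
    (Pairwise fun k l => Disjoint (Set.univ.pi (E k)) (Set.univ.pi (E l))) ∧
    f = fun x => ∑ k, (Set.univ.pi (E k)).indicator (fun _ => a k) x

/-- The Euclidean ball `B(x,r)` in `ℝⁿ`. -/
def eucBall (n : ℕ) (x : Fin n → ℝ) (r : ℝ) : Set (Fin n → ℝ) :=
  {y | ∑ i, (y i - x i) ^ 2 < r ^ 2}

/-- The (uncentered) maximal operator in the `k`-th variable. -/
def maxVar (n : ℕ) (k : Fin n) (g : (Fin n → ℝ) → ℝ≥0∞) : (Fin n → ℝ) → ℝ≥0∞ :=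
  fun x => ⨆ (a : ℝ) (b : ℝ) (_ : x k ∈ Set.Ioo a b),
    (volume (Set.Ioo a b))⁻¹ * ∫⁻ y in Set.Ioo a b, g (Function.update x k y)

/-- The centered Hardy–Littlewood maximal operator on `ℝⁿ`. -/
def centeredMax (n : ℕ) (g : (Fin n → ℝ) → ℝ≥0∞) : (Fin n → ℝ) → ℝ≥0∞ :=
  fun x => ⨆ (r : ℝ) (_ : 0 < r),
    (volume (eucBall n x r))⁻¹ * ∫⁻ y in eucBall n x r, g y

/-- The composition `M_n ∘ ⋯ ∘ M_1` of the maximal operators in each variable. -/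
def iteratedMax (n : ℕ) (g : (Fin n → ℝ) → ℝ≥0∞) : (Fin n → ℝ) → ℝ≥0∞ :=
  (List.ofFn fun k : Fin n => maxVar n k).foldl (fun h F => F h) g

/-- The iterated maximal operator `ℳ_t(f) = [M_n ⋯ M_1(|f|^t)]^{1/t}`. -/
def iterMaxPow (n : ℕ) (t : ℝ) (f : (Fin n → ℝ) → ℂ) : (Fin n → ℝ) → ℝ≥0∞ :=
  fun x => iteratedMax n (fun y => (‖f y‖₊ : ℝ≥0∞) ^ t) x ^ (1 / t)

/-- The `l^r`-Herz type mixed norm of a sequence of functions on `ℝⁿ`. -/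
def herzSeqNorm (n : ℕ) (r : ℝ≥0∞) (α : Fin n → ℝ) (p q : Fin n → ℝ≥0∞)
    (F : ℤ → (Fin n → ℝ) → ℂ) : ℝ≥0∞ :=
  mixedHerzNormE n α p q fun x => lpZNorm r fun j => (‖F j x‖₊ : ℝ≥0∞)

/-- `N` is a ball quasi-Banach function norm on (nonnegative extended-real-valued)
measurable functions on `ℝⁿ`. -/
def IsBQBFNorm (n : ℕ) (N : ((Fin n → ℝ) → ℝ≥0∞) → ℝ≥0∞) : Prop :=
  (∀ f : (Fin n → ℝ) → ℝ≥0∞, Measurable f → N f = 0 → f =ᵐ[volume] 0) ∧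
  (∀ f g : (Fin n → ℝ) → ℝ≥0∞, Measurable f → Measurable g →
    (∀ᵐ x ∂volume, g x ≤ f x) → N g ≤ N f) ∧
  (∀ (fm : ℕ → (Fin n → ℝ) → ℝ≥0∞) (f : (Fin n → ℝ) → ℝ≥0∞),
    (∀ m, Measurable (fm m)) → Measurable f →
    (∀ᵐ x ∂volume, Monotone (fun m => fm m x) ∧
      Tendsto (fun m => fm m x) atTop (nhds (f x))) →
    Monotone (fun m => N (fm m)) ∧ Tendsto (fun m => N (fm m)) atTop (nhds (N f))) ∧
  (∀ (x : Fin n → ℝ) (r : ℝ), 0 < r →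
    N ((eucBall n x r).indicator fun _ => (1 : ℝ≥0∞)) ≠ ∞)

/-- `N` is a ball Banach function norm: a ball quasi-Banach function norm that moreover
satisfies the triangle inequality and locally dominates the `L¹` norm. -/
def IsBallBanachNorm (n : ℕ) (N : ((Fin n → ℝ) → ℝ≥0∞) → ℝ≥0∞) : Prop :=
  IsBQBFNorm n N ∧
  (∀ f g : (Fin n → ℝ) → ℝ≥0∞, Measurable f → Measurable g → N (f + g) ≤ N f + N g) ∧
  (∀ (x : Fin n → ℝ) (r : ℝ), 0 < r → ∃ C : ℝ≥0∞, 0 < C ∧ C ≠ ∞ ∧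
    ∀ f : (Fin n → ℝ) → ℝ≥0∞, Measurable f → (∫⁻ y in eucBall n x r, f y) ≤ C * N f)

/-- The associate (Köthe dual) norm of a function norm `N`. -/
def assocNormOf (n : ℕ) (N : ((Fin n → ℝ) → ℝ≥0∞) → ℝ≥0∞)
    (f : (Fin n → ℝ) → ℝ≥0∞) : ℝ≥0∞ :=
  ⨆ (g : (Fin n → ℝ) → ℝ≥0∞) (_ : Measurable g) (_ : N g = 1), ∫⁻ x, f x * g x

/-- The `θ`-convexification of a function norm: `‖f‖_{X^θ} = ‖|f|^θ‖_X^{1/θ}`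
(here stated with `θ` in place of `1/p`, so `X^{1/p}` is `convexPow n (1/p) N`). -/
def convexPow (n : ℕ) (θ : ℝ) (N : ((Fin n → ℝ) → ℝ≥0∞) → ℝ≥0∞)
    (f : (Fin n → ℝ) → ℝ≥0∞) : ℝ≥0∞ :=
  N (fun x => f x ^ θ) ^ (1 / θ)

/-- The associate space norm of the mixed-norm Herz space, for complex-valued functions. -/
def herzAssocNormC (n : ℕ) (α : Fin n → ℝ) (p q : Fin n → ℝ≥0∞)
    (f : (Fin n → ℝ) → ℂ) : ℝ≥0∞ :=
  ⨆ (g : (Fin n → ℝ) → ℂ) (_ : Measurable g) (_ : herzNormC n α p q g = 1),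
    ∫⁻ x, (‖f x * g x‖₊ : ℝ≥0∞)
structure DualPair {Y : Type} [MeasurableSpace Y] (μ : Measure Y)
    (N N' : (Y → ℝ≥0∞) → ℝ≥0∞) : Prop where
  mono : ∀ f g : Y → ℝ≥0∞, (∀ y, f y ≤ g y) → N f ≤ N g
  homog : ∀ (c : ℝ≥0∞) (f : Y → ℝ≥0∞), Measurable f → N (fun y => c * f y) = c * N f
  meas : ∀ (T : Type) [MeasurableSpace T] (F : T → Y → ℝ≥0∞),
    Measurable (Function.uncurry F) → Measurable fun t => N (F t)
  meas' : ∀ (T : Type) [MeasurableSpace T] (F : T → Y → ℝ≥0∞),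
    Measurable (Function.uncurry F) → Measurable fun t => N' (F t)
  holder : ∀ f g : Y → ℝ≥0∞, Measurable f → Measurable g →
    ∫⁻ y, f y * g y ∂μ ≤ N' f * N g
  sat : ∀ (T : Type) [MeasurableSpace T] (F : T → Y → ℝ≥0∞),
    Measurable (Function.uncurry F) → ∃ G : ℕ → T → Y → ℝ≥0∞,
      (∀ k, Measurable (Function.uncurry (G k))) ∧ (∀ k t, N (G k t) ≤ 1) ∧
      ∀ t, N' (F t) ≤ ⨆ k, ∫⁻ y, F t y * G k t y ∂μ

theorem meas_slice {T Y : Type} [MeasurableSpace T] [MeasurableSpace Y] {F : T → Y → ℝ≥0∞}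
    (hF : Measurable (Function.uncurry F)) (t : T) : Measurable (F t) :=
  hF.comp measurable_prodMk_left

theorem meas_lint {T Y : Type} [MeasurableSpace T] [MeasurableSpace Y] (μ : Measure Y)
    [SFinite μ] {F : T → Y → ℝ≥0∞}
    (hF : Measurable (Function.uncurry F)) : Measurable fun t => ∫⁻ y, F t y ∂μ :=
  Measurable.lintegral_prod_right' hF

theorem DualPair.satMono {Y : Type} [MeasurableSpace Y] {μ : Measure Y} [SFinite μ]
    {N N' : (Y → ℝ≥0∞) → ℝ≥0∞} (h : DualPair μ N N') (T : Type) [MeasurableSpace T]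
    (F : T → Y → ℝ≥0∞) (hF : Measurable (Function.uncurry F)) : ∃ G : ℕ → T → Y → ℝ≥0∞,
      (∀ k, Measurable (Function.uncurry (G k))) ∧ (∀ k t, N (G k t) ≤ 1) ∧
      (∀ t, Monotone fun k => ∫⁻ y, F t y * G k t y ∂μ) ∧
      ∀ t, N' (F t) ≤ ⨆ k, ∫⁻ y, F t y * G k t y ∂μ := by
  classical
  obtain ⟨G, hG, hN, hs⟩ := h.sat T F hF
  let H : ℕ → T → Y → ℝ≥0∞ := fun m => Nat.rec (G 0) (fun m Hm t =>
    if ∫⁻ y, F t y * Hm t y ∂μ ≤ ∫⁻ y, F t y * G (m + 1) t y ∂μ then G (m + 1) t else Hm t) m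
  have H0 : H 0 = G 0 := rfl
  have HS : ∀ m t, H (m + 1) t =
    if ∫⁻ y, F t y * H m t y ∂μ ≤ ∫⁻ y, F t y * G (m + 1) t y ∂μ then G (m + 1) t else H m t :=
    fun m t => rfl
  have Hm : ∀ m, Measurable (Function.uncurry (H m)) := by
    intro m
    induction m with
    | zero => rw [H0]; exact hG 0
    | succ m ih =>
      have : Function.uncurry (H (m + 1)) = fun z : T × Y =>
          if z ∈ Prod.fst ⁻¹' {t | ∫⁻ y, F t y * H m t y ∂μ ≤ ∫⁻ y, F t y * G (m + 1) t y ∂μ}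
          then Function.uncurry (G (m + 1)) z else Function.uncurry (H m) z := by
        ext ⟨t, y⟩
        simp only [Function.uncurry, HS, Set.mem_preimage, Set.mem_ofPred_eq]
        split_ifs <;> rfl
      rw [this]
      refine Measurable.ite ?_ (hG _) ih
      exact measurable_fst (measurableSet_le (meas_lint μ (hF.mul ih)) (meas_lint μ (hF.mul (hG _))))
  refine ⟨H, Hm, ?_, ?_, ?_⟩
  · intro m t
    induction m with
    | zero => exact hN 0 t
    | succ m ih =>
      rw [HS]; split_ifs
      · exact hN _ _
      · exact ih
  · intro t
    refine monotone_nat_of_le_succ fun m => ?_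
    simp only [HS]
    split_ifs with hh
    · exact hh
    · exact le_rfl
  · intro t
    refine (hs t).trans (iSup_mono fun m => ?_)
    cases m with
    | zero => exact le_rfl
    | succ m =>
      simp only [HS]
      split_ifs with hh
      · exact le_rfl
      · exact (not_le.1 hh).le

def Nq {Y : Type} [MeasurableSpace Y] (q : ℝ≥0∞) (μ : Measure Y) (f : Y → ℝ≥0∞) : ℝ≥0∞ :=
  if q = ∞ then essSup f μ else (∫⁻ y, f y ^ q.toReal ∂μ) ^ (1 / q.toReal)

theorem Nq_top {Y : Type} [MeasurableSpace Y] (μ : Measure Y) (f : Y → ℝ≥0∞) :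
    Nq ∞ μ f = essSup f μ := by simp [Nq]

theorem Nq_one {Y : Type} [MeasurableSpace Y] (μ : Measure Y) (f : Y → ℝ≥0∞) :
    Nq 1 μ f = ∫⁻ y, f y ∂μ := by simp [Nq]

theorem Nq_mono {Y : Type} [MeasurableSpace Y] (q : ℝ≥0∞) (μ : Measure Y) (f g : Y → ℝ≥0∞)
    (h : ∀ y, f y ≤ g y) : Nq q μ f ≤ Nq q μ g := by
  unfold Nq
  split_ifs
  · exact essSup_mono_ae (Eventually.of_forall h)
  · have := ENNReal.toReal_nonneg (a := q)
    gcongr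
    exact h _

theorem Nq_homog {Y : Type} [MeasurableSpace Y] (q : ℝ≥0∞) (hq : 1 ≤ q) (μ : Measure Y)
    (c : ℝ≥0∞) (f : Y → ℝ≥0∞) (hf : Measurable f) :
    Nq q μ (fun y => c * f y) = c * Nq q μ f := by
  unfold Nq
  split_ifs with h
  · exact ENNReal.essSup_const_mul
  · have h0 : 0 < q.toReal := ENNReal.toReal_pos (by positivity) h
    simp_rw [ENNReal.mul_rpow_of_nonneg _ _ h0.le]
    rw [lintegral_const_mul _ (hf.pow_const _), ENNReal.mul_rpow_of_nonneg _ _ (by positivity),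
      ← ENNReal.rpow_mul, mul_one_div_cancel h0.ne', ENNReal.rpow_one]

theorem lt_essSup_iff' {Y : Type} [MeasurableSpace Y] (μ : Measure Y) (f : Y → ℝ≥0∞) (c : ℝ≥0∞) :
    c < essSup f μ ↔ 0 < μ {y | c < f y} := by
  rw [← not_iff_not, not_lt, not_lt, nonpos_iff_eq_zero]
  constructor
  · intro h
    have := ENNReal.ae_le_essSup (μ := μ) f
    rw [← compl_mem_ae_iff]
    filter_upwards [this] with y hy
    simpa using hy.trans h
  · intro h
    refine essSup_le_of_ae_le _ ?_
    rw [← compl_mem_ae_iff] at h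
    filter_upwards [h] with y hy
    simpa using hy

theorem Nq_meas {Y : Type} [MeasurableSpace Y] (q : ℝ≥0∞) (μ : Measure Y) [SFinite μ]
    (T : Type) [MeasurableSpace T] (F : T → Y → ℝ≥0∞) (hF : Measurable (Function.uncurry F)) :
    Measurable fun t => Nq q μ (F t) := by
  unfold Nq
  split_ifs
  · refine measurable_of_Ioi fun c => ?_
    have : (fun t => essSup (F t) μ) ⁻¹' Set.Ioi c =
        {t | 0 < μ (Prod.mk t ⁻¹' {z : T × Y | c < Function.uncurry F z})} := by
      ext t
      simp only [Set.mem_preimage, Set.mem_Ioi, lt_essSup_iff', Set.mem_ofPred_eq]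
      rfl
    rw [this]
    exact measurableSet_lt measurable_const
      (measurable_measure_prodMk_left (measurableSet_lt measurable_const hF))
  · exact (meas_lint μ (F := fun t y => F t y ^ q.toReal) (hF.pow_const _)).pow_const _

theorem Nq_cases {q q' : ℝ≥0∞} (h : 1 / q + 1 / q' = 1) :
    (q = 1 ∧ q' = ∞) ∨ (q = ∞ ∧ q' = 1) ∨
      (q ≠ ∞ ∧ q' ≠ ∞ ∧ q'.toReal.HolderConjugate q.toReal) := by
  simp only [one_div] at h
  have hc : ENNReal.HolderConjugate q q' := ⟨by simpa using h⟩
  by_cases h1 : q = ∞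
  · right; left; subst h1; simpa using h
  by_cases h2 : q' = ∞
  · left; subst h2; simpa using h
  right; right
  refine ⟨h1, h2, ?_⟩
  have ha : 1 ≤ q := hc.one_le
  have hb : 1 ≤ q' := hc.symm.one_le
  have hx : q.toReal⁻¹ + q'.toReal⁻¹ = 1 := by
    have := congrArg ENNReal.toReal h
    rw [ENNReal.toReal_add (by simp; positivity) (by simp; positivity)] at this
    simpa using this
  have p1 : 0 < q.toReal := ENNReal.toReal_pos (by positivity) h1
  have p2 : 0 < q'.toReal := ENNReal.toReal_pos (by positivity) h2
  exact ⟨by simpa [add_comm] using hx, p2, p1⟩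

theorem Nq_holder {Y : Type} [MeasurableSpace Y] {q q' : ℝ≥0∞} (h : 1 / q + 1 / q' = 1)
    (μ : Measure Y) (f g : Y → ℝ≥0∞) (hf : Measurable f) (hg : Measurable g) :
    ∫⁻ y, f y * g y ∂μ ≤ Nq q' μ f * Nq q μ g := by
  rcases Nq_cases h with ⟨rfl, rfl⟩ | ⟨rfl, rfl⟩ | ⟨h1, h2, h3⟩
  · rw [Nq_one, Nq_top, ← lintegral_const_mul _ hg]
    refine lintegral_mono_ae ?_
    filter_upwards [ENNReal.ae_le_essSup (μ := μ) f] with y hy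
    gcongr
  · rw [Nq_one, Nq_top, ← lintegral_mul_const _ hf]
    refine lintegral_mono_ae ?_
    filter_upwards [ENNReal.ae_le_essSup (μ := μ) g] with y hy
    gcongr
  · simp only [Nq, h1, h2, if_false]
    exact ENNReal.lintegral_mul_le_Lp_mul_Lq μ h3 hf.aemeasurable hg.aemeasurable

theorem sat_reindex {Y ι : Type} [Countable ι] [Nonempty ι] [MeasurableSpace Y] {μ : Measure Y}
    {N : (Y → ℝ≥0∞) → ℝ≥0∞} {T : Type} [MeasurableSpace T]
    {F : T → Y → ℝ≥0∞} {A : T → ℝ≥0∞} (G : ι → T → Y → ℝ≥0∞)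
    (h1 : ∀ k, Measurable (Function.uncurry (G k))) (h2 : ∀ k t, N (G k t) ≤ 1)
    (h3 : ∀ t, A t ≤ ⨆ k, ∫⁻ y, F t y * G k t y ∂μ) :
    ∃ G : ℕ → T → Y → ℝ≥0∞,
      (∀ k, Measurable (Function.uncurry (G k))) ∧ (∀ k t, N (G k t) ≤ 1) ∧
      ∀ t, A t ≤ ⨆ k, ∫⁻ y, F t y * G k t y ∂μ := by
  obtain ⟨e, he⟩ := exists_surjective_nat ι
  refine ⟨fun k => G (e k), fun k => h1 _, fun k => h2 _, fun t => ?_⟩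
  rw [he.iSup_comp (g := fun k => ∫⁻ y, F t y * G k t y ∂μ)]
  exact h3 t

theorem Nq_sat_top {Y : Type} [MeasurableSpace Y]
    (μ : Measure Y) [SigmaFinite μ] (T : Type) [MeasurableSpace T] (F : T → Y → ℝ≥0∞)
    (hF : Measurable (Function.uncurry F)) : ∃ G : ℕ → T → Y → ℝ≥0∞,
      (∀ k, Measurable (Function.uncurry (G k))) ∧ (∀ k t, Nq 1 μ (G k t) ≤ 1) ∧
      ∀ t, Nq ∞ μ (F t) ≤ ⨆ k, ∫⁻ y, F t y * G k t y ∂μ := by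
  let S := spanningSets μ
  let E : ℚ × ℕ → Set (T × Y) := fun k =>
    {z | ENNReal.ofReal k.1 < Function.uncurry F z} ∩ Prod.snd ⁻¹' (S k.2)
  have hE : ∀ k, MeasurableSet (E k) := fun k =>
    (measurableSet_lt measurable_const hF).inter
      (measurable_snd (measurableSet_spanningSets μ _))
  let G : ℚ × ℕ → T → Y → ℝ≥0∞ := fun k t y =>
    (μ (Prod.mk t ⁻¹' E k))⁻¹ * (E k).indicator 1 (t, y)
  have hint : ∀ k t, ∫⁻ y, (E k).indicator (1 : T × Y → ℝ≥0∞) (t, y) ∂μ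
      = μ (Prod.mk t ⁻¹' E k) := by
    intro k t
    rw [← lintegral_indicator_one (measurable_prodMk_left (hE k))]
    rfl
  have hmi : ∀ k t, Measurable fun y => (E k).indicator (1 : T × Y → ℝ≥0∞) (t, y) :=
    fun k t => (measurable_one.indicator (hE k)).comp measurable_prodMk_left
  refine sat_reindex G (fun k => ?_) (fun k t => ?_) (fun t => ?_)
  · exact ((measurable_measure_prodMk_left (hE k)).inv.comp measurable_fst).mul
      (measurable_one.indicator (hE k))
  · rw [Nq_one]
    simp only [G]
    rw [lintegral_const_mul _ (hmi k t), hint]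
    exact ENNReal.inv_mul_le_one _
  · rw [Nq_top]
    refine le_of_forall_lt fun c hc => ?_
    obtain ⟨r, hr0, hr1, hr2⟩ := ENNReal.lt_iff_exists_rat_btwn.1 hc
    have hr2' : ENNReal.ofReal r < essSup (F t) μ := hr2
    rw [lt_essSup_iff'] at hr2'
    have hun : {y | ENNReal.ofReal r < F t y} = ⋃ m, Prod.mk t ⁻¹' E (r, m) := by
      have : ⋃ m, S m = Set.univ := iUnion_spanningSets μ
      ext y
      have hy : ∃ m, y ∈ S m := by simpa using this.ge (Set.mem_univ y)
      simp [E, hy]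
    obtain ⟨m, hm⟩ : ∃ m, μ (Prod.mk t ⁻¹' E (r, m)) ≠ 0 := by
      by_contra! hh
      rw [hun, measure_iUnion_null hh] at hr2'
      exact lt_irrefl _ hr2'
    refine lt_of_lt_of_le hr1 (le_iSup_of_le (r, m) ?_)
    have hfin : μ (Prod.mk t ⁻¹' E (r, m)) ≠ ∞ := by
      refine ((measure_mono ?_).trans_lt (measure_spanningSets_lt_top μ m)).ne
      intro y hy
      exact hy.2
    calc ENNReal.ofReal r = ENNReal.ofReal r * ((μ (Prod.mk t ⁻¹' E (r, m)))⁻¹ *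
          μ (Prod.mk t ⁻¹' E (r, m))) := by rw [ENNReal.inv_mul_cancel hm hfin, mul_one]
      _ = ∫⁻ y, ENNReal.ofReal r * G (r, m) t y ∂μ := by
          simp only [G]
          rw [lintegral_const_mul _ ((hmi _ t).const_mul _), lintegral_const_mul _ (hmi _ t), hint]
      _ ≤ _ := by
          refine lintegral_mono fun y => ?_
          by_cases hy : (t, y) ∈ E (r, m)
          · gcongr
            exact hy.1.le
          · simp [G, hy]

theorem Nq_sat_real {Y : Type} [MeasurableSpace Y] {r s : ℝ} (h : r.HolderConjugate s)
    (μ : Measure Y) [SigmaFinite μ] (T : Type) [MeasurableSpace T] (F : T → Y → ℝ≥0∞)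
    (hF : Measurable (Function.uncurry F)) : ∃ G : ℕ → T → Y → ℝ≥0∞,
      (∀ k, Measurable (Function.uncurry (G k))) ∧
      (∀ k t, (∫⁻ y, G k t y ^ s ∂μ) ^ (1 / s) ≤ 1) ∧
      ∀ t, (∫⁻ y, F t y ^ r ∂μ) ^ (1 / r) ≤ ⨆ k, ∫⁻ y, F t y * G k t y ∂μ := by
  let S := spanningSets μ
  have hr := h.pos
  have hs := h.symm.pos
  let P : ℕ → T → Y → ℝ≥0∞ := fun m t y => (S m).indicator (fun y => min (F t y) m) y
  have hP : ∀ m, Measurable (Function.uncurry (P m)) := fun m => by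
    have : Function.uncurry (P m) = (Prod.snd ⁻¹' (S m)).indicator
        (fun z => min (Function.uncurry F z) m) := rfl
    rw [this]
    exact (hF.min measurable_const).indicator (measurable_snd (measurableSet_spanningSets μ _))
  have hPF : ∀ m t y, P m t y ≤ F t y := fun m t y => by
    by_cases hy : y ∈ S m <;> simp [P, hy]
  have hPm : ∀ t y, Monotone fun m => P m t y := fun t y a b hab => by
    by_cases hy : y ∈ S a
    · have hy' : y ∈ S b := monotone_spanningSets μ hab hy
      simp only [P, hy, hy', Set.indicator_of_mem]
      gcongr
    · simp [P, hy]
  have hPs : ∀ t y, ⨆ m, P m t y = F t y := fun t y => by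
    refine le_antisymm (iSup_le fun m => hPF m t y) ?_
    refine le_of_forall_lt fun c hc => ?_
    obtain ⟨m, hm⟩ : ∃ m, y ∈ S m := by
      have : ⋃ m, S m = Set.univ := iUnion_spanningSets μ
      simpa using this.ge (Set.mem_univ y)
    obtain ⟨k, hk⟩ := ENNReal.exists_nat_gt hc.ne_top
    refine lt_of_lt_of_le ?_ (le_iSup _ (max m k))
    have : y ∈ S (max m k) := monotone_spanningSets μ (le_max_left _ _) hm
    simp only [P, this, Set.indicator_of_mem, lt_min_iff, hc, true_and]
    exact hk.trans_le (by exact_mod_cast le_max_right _ _)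
  let I : ℕ → T → ℝ≥0∞ := fun m t => ∫⁻ y, P m t y ^ r ∂μ
  have hIm : ∀ m, Measurable (I m) := fun m =>
    meas_lint μ (F := fun t y => P m t y ^ r) ((hP m).pow_const _)
  have hIfin : ∀ m t, I m t ≠ ∞ := fun m t => by
    have : I m t ≤ ∫⁻ y, (S m).indicator (fun _ => (m : ℝ≥0∞) ^ r) y ∂μ := by
      refine lintegral_mono fun y => ?_
      by_cases hy : y ∈ S m
      · simp only [P, hy, Set.indicator_of_mem]
        gcongr
        exact min_le_right _ _
      · simp [P, hy, hr]
    refine (this.trans_lt ?_).ne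
    rw [lintegral_indicator_const (measurableSet_spanningSets μ _)]
    exact ENNReal.mul_lt_top (ENNReal.rpow_lt_top_of_nonneg hr.le (by simp))
      (measure_spanningSets_lt_top μ m)
  refine ⟨fun m t y => (I m t ^ (1 / s))⁻¹ * P m t y ^ (r - 1), fun m => ?_, fun m t => ?_,
    fun t => ?_⟩
  · exact ((((hIm m).pow_const _).inv).comp measurable_fst).mul ((hP m).pow_const _)
  · have hrs : (r - 1) * s = r := by
      have := h.sub_one_mul_conj; exact this
    simp_rw [ENNReal.mul_rpow_of_nonneg _ _ hs.le, ← ENNReal.rpow_mul, hrs, ENNReal.inv_rpow,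
      ← ENNReal.rpow_mul, one_div_mul_cancel hs.ne', ENNReal.rpow_one]
    rw [lintegral_const_mul _ ((meas_slice (hP m) t).pow_const _)]
    exact ENNReal.rpow_le_one (ENNReal.inv_mul_le_one _) (by positivity)
  · have hsup : ∫⁻ y, F t y ^ r ∂μ = ⨆ m, I m t := by
      rw [← lintegral_iSup (fun m => (meas_slice (hP m) t).pow_const _)]
      · congr 1; ext y
        rw [← hPs t y]
        exact (ENNReal.orderIsoRpow r hr).map_iSup _
      · intro a b hab y
        exact ENNReal.rpow_le_rpow (hPm t y hab) hr.le
    rw [hsup]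
    have : (⨆ m, I m t) ^ (1 / r) = ⨆ m, I m t ^ (1 / r) :=
      (ENNReal.orderIsoRpow (1 / r) (by positivity)).map_iSup _
    rw [this]
    refine iSup_mono fun m => ?_
    by_cases h0 : I m t = 0
    · rw [h0, ENNReal.zero_rpow_of_pos (by positivity)]; exact zero_le
    calc I m t ^ (1 / r) = (I m t ^ (1 / s))⁻¹ * I m t := by
          rw [← ENNReal.rpow_neg]
          nth_rewrite 3 [← ENNReal.rpow_one (I m t)]
          rw [← ENNReal.rpow_add _ _ h0 (hIfin m t)]
          congr 1
          have := h.inv_add_inv_eq_one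
          simp only [one_div]; linarith
      _ = ∫⁻ y, (I m t ^ (1 / s))⁻¹ * P m t y ^ r ∂μ :=
          (lintegral_const_mul _ ((meas_slice (hP m) t).pow_const _)).symm
      _ ≤ _ := by
          refine lintegral_mono fun y => ?_
          have : P m t y ^ r = P m t y * P m t y ^ (r - 1) := by
            nth_rewrite 2 [← ENNReal.rpow_one (P m t y)]
            rw [← ENNReal.rpow_add_of_nonneg _ _ zero_le_one h.sub_one_pos.le]
            congr 1; ring
          rw [this, mul_left_comm]
          gcongr
          exact hPF m t y

theorem Nq_dual {Y : Type} [MeasurableSpace Y] {q q' : ℝ≥0∞} (hq : 1 ≤ q)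
    (h : 1 / q + 1 / q' = 1) (μ : Measure Y) [SigmaFinite μ] :
    DualPair μ (Nq q μ) (Nq q' μ) where
  mono := Nq_mono q μ
  homog := Nq_homog q hq μ
  meas := fun T _ => Nq_meas q μ T
  meas' := fun T _ => Nq_meas q' μ T
  holder := Nq_holder h μ
  sat := by
    intro T _ F hF
    rcases Nq_cases h with ⟨rfl, rfl⟩ | ⟨rfl, rfl⟩ | ⟨h1, h2, h3⟩
    · exact Nq_sat_top μ T F hF
    · refine ⟨fun _ _ _ => 1, fun _ => measurable_const, fun _ _ => ?_, fun t => ?_⟩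
      · rw [Nq_top]
        exact essSup_le_of_ae_le _ (Eventually.of_forall fun _ => le_rfl)
      · simp [Nq_one]
    · simp only [Nq, h1, h2, if_false]
      exact Nq_sat_real h3 μ T F hF

theorem Nq_congr {Y : Type} [MeasurableSpace Y] (q : ℝ≥0∞) (μ : Measure Y) {f g : Y → ℝ≥0∞}
    (h : f =ᵐ[μ] g) : Nq q μ f = Nq q μ g := by
  unfold Nq
  split_ifs
  · exact essSup_congr_ae h
  · congr 1
    refine lintegral_congr_ae ?_
    filter_upwards [h] with y hy
    rw [hy]

theorem ring_meas (k : ℤ) : MeasurableSet (herzRing k) := measurableSet_Ioo.diff measurableSet_Ioo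

theorem mem_ring (k : ℤ) (x : ℝ) : x ∈ herzRing k ↔ (2 : ℝ) ^ (k - 1) ≤ |x| ∧ |x| < (2 : ℝ) ^ k := by
  unfold herzRing
  rw [Set.mem_sdiff, Set.mem_Ioo, Set.mem_Ioo, ← abs_lt, ← abs_lt, not_lt, and_comm]

def ringIdx (x : ℝ) : ℤ := Int.log 2 |x| + 1

theorem ringIdx_iff (k : ℤ) (x : ℝ) (hx : x ≠ 0) : x ∈ herzRing k ↔ ringIdx x = k := by
  have h0 : 0 < |x| := abs_pos.2 hx
  have h1 := Int.zpow_le_iff_le_log (b := 2) (by norm_num) h0 (x := k - 1)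
  have h2 := Int.lt_zpow_iff_log_lt (b := 2) (by norm_num) h0 (x := k)
  rw [mem_ring]
  unfold ringIdx
  push_cast at h1 h2
  rw [h1, h2]
  omega

theorem zero_notMem_ring (k : ℤ) : (0 : ℝ) ∉ herzRing k := by
  rw [mem_ring]
  have : (0 : ℝ) < 2 ^ (k - 1) := by positivity
  simp [this]

theorem ringIdx_of_mem {k : ℤ} {x : ℝ} (h : x ∈ herzRing k) : ringIdx x = k := by
  refine (ringIdx_iff k x ?_).1 h
  rintro rfl
  exact zero_notMem_ring k h

theorem ringIdx_meas : Measurable ringIdx := by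
  refine measurable_to_countable' fun k => ?_
  have : ringIdx ⁻¹' {k} = herzRing k ∪ ({0} ∩ ringIdx ⁻¹' {k}) := by
    ext x
    by_cases hx : x = 0
    · subst hx; simp [zero_notMem_ring]
    · simp [hx, ringIdx_iff k x hx]
  rw [this]
  exact (ring_meas k).union ((Set.subsingleton_singleton.anti Set.inter_subset_left).measurableSet)

theorem lint_rings (f : ℝ → ℝ≥0∞) : ∫⁻ x, f x = ∫⁻ k : ℤ, (∫⁻ x in herzRing k, f x) ∂Measure.count := by
  rw [lintegral_count, ← lintegral_iUnion ring_meas]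
  · rw [← setLIntegral_univ]
    refine setLIntegral_congr ?_
    have h0 : ∀ᵐ x : ℝ, x ≠ 0 := by simp [ae_iff]
    filter_upwards [h0] with x hx
    have : x ∈ ⋃ k, herzRing k := Set.mem_iUnion.2 ⟨_, (ringIdx_iff _ x hx).2 rfl⟩
    exact propext (by
      constructor
      · intro _; exact this
      · intro _; trivial)
  · intro i j hij
    refine Set.disjoint_left.2 fun x hi hj => hij ?_
    rw [← ringIdx_of_mem hi, ringIdx_of_mem hj]

def hw (α : ℝ) (k : ℤ) : ℝ≥0∞ := ENNReal.ofReal ((2 : ℝ) ^ ((k : ℝ) * α))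

theorem hw_mul (α : ℝ) (k : ℤ) : hw α k * hw (-α) k = 1 := by
  unfold hw
  rw [← ENNReal.ofReal_mul (by positivity), ← Real.rpow_add (by norm_num)]
  simp

theorem herz_eq (α : ℝ) (p q : ℝ≥0∞) (g : ℝ → ℝ≥0∞) : herzNorm1 α p q g =
    Nq p (Measure.count : Measure ℤ) fun k => hw α k * Nq q (volume.restrict (herzRing k)) g := by
  have hl : ∀ k, lqNormOn q (herzRing k) g = Nq q (volume.restrict (herzRing k)) g := by
    intro k
    unfold lqNormOn Nq
    split_ifs
    · exact ENNReal.essSup_indicator_eq_essSup_restrict (ring_meas k)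
    · rfl
  unfold herzNorm1 lpZNorm
  simp only [hl]
  by_cases hp : p = ∞
  · subst hp
    rw [Nq_top, essSup_count, if_pos rfl]; rfl
  · rw [if_neg hp, Nq, if_neg hp, lintegral_count]; rfl

theorem herz_meas (α : ℝ) (p q : ℝ≥0∞) (T : Type) [MeasurableSpace T] (F : T → ℝ → ℝ≥0∞)
    (hF : Measurable (Function.uncurry F)) : Measurable fun t => herzNorm1 α p q (F t) := by
  simp only [herz_eq]
  refine Nq_meas p _ T (fun t k => hw α k * Nq q (volume.restrict (herzRing k)) (F t)) ?_
  refine measurable_from_prod_countable_left fun k => ?_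
  have := (Nq_meas q (volume.restrict (herzRing k)) T F hF).const_mul (hw α k)
  exact this

theorem herz_dual (α : ℝ) {p q p' q' : ℝ≥0∞} (hp : 1 ≤ p) (hq : 1 ≤ q)
    (hp' : 1 / p + 1 / p' = 1) (hq' : 1 / q + 1 / q' = 1) :
    DualPair (volume : Measure ℝ) (herzNorm1 α p q) (herzNorm1 (-α) p' q') where
  mono := by
    intro f g h
    simp only [herz_eq]
    refine Nq_mono _ _ _ _ fun k => ?_
    gcongr
    exact Nq_mono _ _ _ _ h
  homog := by
    intro c f hf
    simp only [herz_eq]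
    simp_rw [Nq_homog q hq _ c f hf]
    rw [← Nq_homog p hp _ c _ (measurable_of_countable _)]
    simp_rw [mul_left_comm]
  meas := fun T _ => herz_meas α p q T
  meas' := fun T _ => herz_meas (-α) p' q' T
  holder := by
    intro f g hf hg
    rw [lint_rings, herz_eq, herz_eq]
    refine le_trans ?_ (Nq_holder hp' _ _ _ (measurable_of_countable _) (measurable_of_countable _))
    refine lintegral_mono fun k => ?_
    refine (Nq_holder hq' _ f g hf hg).trans_eq ?_
    have := hw_mul α k
    rw [mul_mul_mul_comm, mul_comm (hw (-α) k), this, one_mul]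
  sat := by
    intro T _ F hF
    have h1 := fun k : ℤ => (Nq_dual hq hq' (volume.restrict (herzRing k))).satMono T F hF
    choose G hG hGN hGm hGs using h1
    let A : T → ℤ → ℝ≥0∞ := fun t k => hw (-α) k * Nq q' (volume.restrict (herzRing k)) (F t)
    have hA : Measurable (Function.uncurry A) := by
      refine measurable_from_prod_countable_left fun k => ?_
      have := (Nq_meas q' (volume.restrict (herzRing k)) T F hF).const_mul (hw (-α) k)
      exact this
    obtain ⟨B, hB, hBN, hBs⟩ := (Nq_dual hp hp' (Measure.count : Measure ℤ)).sat T A hA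
    let c : ℕ → T → ℤ → ℝ≥0∞ := fun i t k => hw (-α) k * B i t k
    let g : ℕ × ℕ → T → ℝ → ℝ≥0∞ := fun ij t x =>
      c ij.1 t (ringIdx x) * G (ringIdx x) ij.2 t x
    have hgr : ∀ ij t k x, x ∈ herzRing k → g ij t x = c ij.1 t k * G k ij.2 t x := by
      intro ij t k x hx
      simp only [g, ringIdx_of_mem hx]
    have hgm : ∀ ij, Measurable (Function.uncurry (g ij)) := by
      intro ij
      have : Measurable fun z : (T × ℝ) × ℤ => c ij.1 z.1.1 z.2 * G z.2 ij.2 z.1.1 z.1.2 := by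
        refine measurable_from_prod_countable_left fun k => ?_
        have h1 : Measurable fun z : T × ℝ => B ij.1 z.1 k :=
          (hB ij.1).comp (measurable_fst.prodMk measurable_const)
        have h2 : Measurable fun z : T × ℝ => G k ij.2 z.1 z.2 := hG k ij.2
        have h3 := (h1.const_mul (hw (-α) k)).mul h2
        exact h3
      have h4 : Measurable fun z : T × ℝ => (z, ringIdx z.2) :=
        measurable_id.prodMk (ringIdx_meas.comp measurable_snd)
      have h5 := this.comp h4
      exact h5
    refine sat_reindex g hgm (fun ij t => ?_) (fun t => ?_)
    · rw [herz_eq]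
      refine le_trans (Nq_mono _ _ _ _ fun k => ?_) (hBN ij.1 t)
      have : Nq q (volume.restrict (herzRing k)) (g ij t) =
          Nq q (volume.restrict (herzRing k)) (fun x => c ij.1 t k * G k ij.2 t x) := by
        refine Nq_congr _ _ ?_
        filter_upwards [ae_restrict_mem (ring_meas k)] with x hx
        exact hgr ij t k x hx
      rw [this, Nq_homog q hq _ _ _ (meas_slice (hG k ij.2) t)]
      simp only [c]
      rw [← mul_assoc, ← mul_assoc, hw_mul, one_mul]
      exact mul_le_of_le_one_right' (hGN k ij.2 t)
    · rw [herz_eq]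
      refine (hBs t).trans (iSup_le fun i => ?_)
      have hint : ∀ j, ∫⁻ x, F t x * g (i, j) t x =
          ∫⁻ k : ℤ, c i t k * (∫⁻ x in herzRing k, F t x * G k j t x) ∂Measure.count := by
        intro j
        rw [lint_rings]
        refine lintegral_congr fun k => ?_
        rw [← lintegral_const_mul (f := fun x => F t x * G k j t x) _
          ((meas_slice hF t).mul (meas_slice (hG k j) t))]
        refine setLIntegral_congr_fun (ring_meas k) fun x hx => ?_
        simp only [hgr (i, j) t k x hx]
        exact mul_left_comm _ _ _
      calc ∫⁻ k, A t k * B i t k ∂Measure.count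
          ≤ ∫⁻ k : ℤ, ⨆ j, c i t k * (∫⁻ x in herzRing k, F t x * G k j t x) ∂Measure.count := by
            refine lintegral_mono fun k => ?_
            simp only [A, c]
            rw [← ENNReal.mul_iSup, mul_right_comm]
            gcongr
            exact hGs k t
        _ = ⨆ j, ∫⁻ k : ℤ, c i t k * (∫⁻ x in herzRing k, F t x * G k j t x) ∂Measure.count := by
            refine lintegral_iSup (fun j => measurable_of_countable _) ?_
            intro a b hab k
            exact mul_le_mul_right (hGm k t hab) _
        _ ≤ _ := by
            refine iSup_le fun j => ?_
            rw [← hint]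
            exact le_iSup (fun ij => ∫⁻ x, F t x * g ij t x) (i, j)

theorem snoc_meas (n : ℕ) :
    Measurable fun z : (Fin n → ℝ) × ℝ => (Fin.snoc z.1 z.2 : Fin (n + 1) → ℝ) := by
  refine measurable_pi_iff.2 fun i => ?_
  refine Fin.lastCases ?_ (fun j => ?_) i
  · simpa using measurable_snd
  · simp only [Fin.snoc_castSucc]
    exact (measurable_pi_apply j).comp measurable_fst

theorem lint_snoc (n : ℕ) (f : (Fin (n + 1) → ℝ) → ℝ≥0∞) (hf : Measurable f) :
    ∫⁻ z, f z = ∫⁻ x : ℝ, ∫⁻ y : Fin n → ℝ, f (Fin.snoc y x) := by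
  have h := (volume_preserving_piFinSuccAbove (fun _ : Fin (n + 1) => ℝ) (Fin.last n)).symm
  rw [← h.lintegral_comp hf, Measure.volume_eq_prod, lintegral_prod]
  · refine lintegral_congr fun x => ?_
    have hm : (volume : Measure ((i : Fin n) → (fun _ : Fin (n + 1) => ℝ) ((Fin.last n).succAbove i)))
      = (volume : Measure (Fin n → ℝ)) := rfl
    refine lintegral_congr fun y => ?_
    congr 1
    exact Fin.insertNth_last' x y
  · exact (hf.comp (MeasurableEquiv.measurable _)).aemeasurable

theorem mixed_dual : ∀ (n : ℕ) (α : Fin n → ℝ) (p q p' q' : Fin n → ℝ≥0∞),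
    (∀ i, 1 ≤ p i) → (∀ i, 1 ≤ q i) →
    (∀ i, 1 / p i + 1 / p' i = 1) → (∀ i, 1 / q i + 1 / q' i = 1) →
    DualPair (volume : Measure (Fin n → ℝ)) (mixedHerzNormE n α p q)
      (mixedHerzNormE n (-α) p' q') := by
  intro n
  induction n with
  | zero =>
    intro α p q p' q' _ _ _ _
    have hN : ∀ (α : Fin 0 → ℝ) (p q : Fin 0 → ℝ≥0∞) f, mixedHerzNormE 0 α p q f = f default := by
      intro α p q f
      simp only [mixedHerzNormE]
      exact congrArg f (Subsingleton.elim _ _)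
    have hI : ∀ f : (Fin 0 → ℝ) → ℝ≥0∞, ∫⁻ y, f y = f default := by
      intro f
      rw [lintegral_unique]
      simp only [volume_pi, Measure.pi_univ, Finset.univ_eq_empty, Finset.prod_empty, mul_one]
      exact congrArg f (Subsingleton.elim _ _)
    constructor
    · intro f g h; rw [hN, hN]; exact h _
    · intro c f _; rw [hN, hN]
    · intro T _ F hF; simp only [hN]; exact hF.comp (measurable_id.prodMk measurable_const)
    · intro T _ F hF; simp only [hN]; exact hF.comp (measurable_id.prodMk measurable_const)
    · intro f g _ _; rw [hN, hN, hI]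
    · intro T _ F hF
      refine ⟨fun _ _ _ => 1, fun _ => measurable_const, fun _ _ => ?_, fun t => ?_⟩
      · rw [hN]
      · rw [hN]; simp only [hI]; simp
  | succ n ih =>
    intro α p q p' q' hp hq hp' hq'
    have D := ih (Fin.init α) (Fin.init p) (Fin.init q) (Fin.init p') (Fin.init q')
      (fun i => hp _) (fun i => hq _) (fun i => hp' _) (fun i => hq' _)
    have E := herz_dual (α (Fin.last n)) (hp (Fin.last n)) (hq (Fin.last n))
      (hp' (Fin.last n)) (hq' (Fin.last n))
    set N := mixedHerzNormE n (Fin.init α) (Fin.init p) (Fin.init q) with hNdef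
    set N' := mixedHerzNormE n (-Fin.init α) (Fin.init p') (Fin.init q') with hN'def
    set M := herzNorm1 (α (Fin.last n)) (p (Fin.last n)) (q (Fin.last n))
    set M' := herzNorm1 (-α (Fin.last n)) (p' (Fin.last n)) (q' (Fin.last n))
    have e1 : ∀ f, mixedHerzNormE (n + 1) α p q f = M fun x => N fun y => f (Fin.snoc y x) :=
      fun f => rfl
    have e2 : ∀ f, mixedHerzNormE (n + 1) (-α) p' q' f =
      M' fun x => N' fun y => f (Fin.snoc y x) := fun f => rfl
    have ms : ∀ (f : (Fin (n + 1) → ℝ) → ℝ≥0∞), Measurable f →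
        Measurable (Function.uncurry fun (x : ℝ) (y : Fin n → ℝ) => f (Fin.snoc y x)) :=
      fun f hf => hf.comp ((snoc_meas n).comp measurable_swap)
    have mT : ∀ (T : Type) [MeasurableSpace T] (F : T → (Fin (n + 1) → ℝ) → ℝ≥0∞),
        Measurable (Function.uncurry F) →
        Measurable (Function.uncurry fun (z : T × ℝ) (y : Fin n → ℝ) => F z.1 (Fin.snoc y z.2)) := by
      intro T _ F hF
      exact hF.comp ((measurable_fst.comp measurable_fst).prodMk
        ((snoc_meas n).comp (measurable_snd.prodMk (measurable_snd.comp measurable_fst))))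
    constructor
    · intro f g h
      rw [e1, e1]
      exact E.mono _ _ fun x => D.mono _ _ fun y => h _
    · intro c f hf
      rw [e1, e1]
      rw [← E.homog c _ (D.meas ℝ _ (ms f hf))]
      congr 1
      ext x
      exact D.homog c _ (meas_slice (ms f hf) x)
    · intro T _ F hF
      simp only [e1]
      exact E.meas T _ (D.meas (T × ℝ) _ (mT T F hF))
    · intro T _ F hF
      simp only [e2]
      exact E.meas' T _ (D.meas' (T × ℝ) _ (mT T F hF))
    · intro f g hf hg
      have hl := lint_snoc n (fun z => f z * g z) (hf.mul hg)
      rw [e1, e2, hl]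
      refine le_trans (lintegral_mono fun x => ?_)
        (E.holder _ _ (D.meas' ℝ _ (ms f hf)) (D.meas ℝ _ (ms g hg)))
      exact D.holder _ _ (meas_slice (ms f hf) x) (meas_slice (ms g hg) x)
    · intro T _ F hF
      have hF' := mT T F hF
      obtain ⟨G, hG, hGN, hGm, hGs⟩ := D.satMono (T × ℝ) _ hF'
      let H : T → ℝ → ℝ≥0∞ := fun t x => N' fun y => F t (Fin.snoc y x)
      have hH : Measurable (Function.uncurry H) := D.meas' (T × ℝ) _ hF'
      obtain ⟨u, hu, huN, hus⟩ := E.sat T H hH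
      let g : ℕ × ℕ → T → (Fin (n + 1) → ℝ) → ℝ≥0∞ := fun ij t z =>
        u ij.1 t (z (Fin.last n)) * G ij.2 (t, z (Fin.last n)) (Fin.init z)
      have hgs : ∀ ij t x y, g ij t (Fin.snoc y x) = u ij.1 t x * G ij.2 (t, x) y := by
        intro ij t x y
        simp only [g, Fin.snoc_last, Fin.init_snoc]
      have hgm : ∀ ij, Measurable (Function.uncurry (g ij)) := by
        intro ij
        have hl : Measurable fun z : T × (Fin (n + 1) → ℝ) => z.2 (Fin.last n) :=
          (measurable_pi_apply _).comp measurable_snd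
        have hi : Measurable fun z : T × (Fin (n + 1) → ℝ) => (Fin.init z.2 : Fin n → ℝ) :=
          measurable_pi_iff.2 fun i => (measurable_pi_apply _).comp measurable_snd
        exact ((hu ij.1).comp (measurable_fst.prodMk hl)).mul
          ((hG ij.2).comp ((measurable_fst.prodMk hl).prodMk hi))
      refine sat_reindex g hgm (fun ij t => ?_) (fun t => ?_)
      · rw [e1]
        refine le_trans (E.mono _ _ fun x => ?_) (huN ij.1 t)
        simp only [hgs]
        rw [D.homog _ _ (meas_slice (hG ij.2) (t, x))]
        exact mul_le_of_le_one_right' (hGN _ _)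
      · rw [e2]
        refine (hus t).trans (iSup_le fun i => ?_)
        have hK : ∀ j, Measurable fun x => ∫⁻ y, F t (Fin.snoc y x) * G j (t, x) y := fun j =>
          (meas_lint volume (F := fun (z : T × ℝ) y => F z.1 (Fin.snoc y z.2) * G j z y)
            (hF'.mul (hG j))).comp measurable_prodMk_left
        have hint : ∀ j, ∫⁻ z, F t z * g (i, j) t z =
            ∫⁻ x, u i t x * ∫⁻ y, F t (Fin.snoc y x) * G j (t, x) y := by
          intro j
          rw [lint_snoc n (fun z => F t z * g (i, j) t z)
            ((meas_slice hF t).mul (meas_slice (hgm (i, j)) t))]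
          refine lintegral_congr fun x => ?_
          rw [← lintegral_const_mul (f := fun y => F t (Fin.snoc y x) * G j (t, x) y) _
            ((meas_slice hF' (t, x)).mul (meas_slice (hG j) (t, x)))]
          refine lintegral_congr fun y => ?_
          rw [hgs]
          exact mul_left_comm _ _ _
        calc ∫⁻ x, H t x * u i t x
            ≤ ∫⁻ x, ⨆ j, u i t x * ∫⁻ y, F t (Fin.snoc y x) * G j (t, x) y := by
              refine lintegral_mono fun x => ?_
              simp only
              rw [← ENNReal.mul_iSup, mul_comm]
              gcongr
              exact hGs (t, x)
          _ = ⨆ j, ∫⁻ x, u i t x * ∫⁻ y, F t (Fin.snoc y x) * G j (t, x) y := by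
              refine lintegral_iSup (fun j => (meas_slice (hu i) t).mul (hK j)) ?_
              intro a b hab x
              exact mul_le_mul_right (hGm (t, x) hab) _
          _ ≤ _ := by
              refine iSup_le fun j => ?_
              rw [← hint]
              exact le_iSup (fun ij => ∫⁻ x, F t x * g ij t x) (i, j)

theorem mixed_le_assoc (n : ℕ) (α : Fin n → ℝ) (p q p' q' : Fin n → ℝ≥0∞)
    (D : DualPair (volume : Measure (Fin n → ℝ)) (mixedHerzNormE n α p q)
      (mixedHerzNormE n (-α) p' q'))
    (f : (Fin n → ℝ) → ℂ) (hf : Measurable f) :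
    herzNormC n (-α) p' q' f ≤ herzAssocNormC n α p q f := by
  have hf' : Measurable fun x => (‖f x‖₊ : ℝ≥0∞) := by fun_prop
  obtain ⟨G, hG, hGN, hGs⟩ := D.sat Unit (fun _ x => (‖f x‖₊ : ℝ≥0∞)) (hf'.comp measurable_snd)
  refine (hGs ()).trans (iSup_le fun k => ?_)
  have hGm := meas_slice (hG k) ()
  have hs : ∫⁻ x, (‖f x‖₊ : ℝ≥0∞) * G k () x =
      ⨆ m : ℕ, ∫⁻ x, (‖f x‖₊ : ℝ≥0∞) * min (G k () x) m := by
    rw [← lintegral_iSup (f := fun (m : ℕ) x => (‖f x‖₊ : ℝ≥0∞) * min (G k () x) m)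
      (fun m => hf'.mul (hGm.min measurable_const))]
    · refine lintegral_congr fun x => ?_
      rw [← ENNReal.mul_iSup, ← inf_iSup_eq, ENNReal.iSup_natCast, inf_top_eq]
    · intro a b hab x
      simp only
      gcongr
  rw [hs]
  refine iSup_le fun m => ?_
  set g : (Fin n → ℝ) → ℝ≥0∞ := fun x => min (G k () x) m with hg
  have hgm : Measurable g := hGm.min measurable_const
  have hgf : ∀ x, g x ≠ ∞ := fun x =>
    ((min_le_right _ _).trans_lt (ENNReal.natCast_lt_top m)).ne
  set c := mixedHerzNormE n α p q g with hc
  have hc1 : c ≤ 1 := (D.mono _ _ fun x => min_le_left _ _).trans (hGN k ())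
  by_cases h0 : c = 0
  · refine (D.holder _ g hf' hgm).trans ?_
    rw [← hc, h0, mul_zero]
    exact zero_le
  have hcf : c ≠ ∞ := (hc1.trans_lt ENNReal.one_lt_top).ne
  let γ : (Fin n → ℝ) → ℂ := fun x => ((c⁻¹ * g x).toReal : ℂ)
  have hγ : ∀ x, (‖γ x‖₊ : ℝ≥0∞) = c⁻¹ * g x := by
    intro x
    have : c⁻¹ * g x ≠ ∞ := ENNReal.mul_ne_top (ENNReal.inv_ne_top.2 h0) (hgf x)
    simp only [γ, Complex.nnnorm_real]
    rw [← enorm_eq_nnnorm, Real.enorm_eq_ofReal ENNReal.toReal_nonneg, ENNReal.ofReal_toReal this]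
  have hγm : Measurable γ := Complex.measurable_ofReal.comp (hgm.const_mul _).ennreal_toReal
  have hγN : herzNormC n α p q γ = 1 := by
    unfold herzNormC
    simp only [hγ]
    rw [D.homog _ _ hgm, ← hc, ENNReal.inv_mul_cancel h0 hcf]
  unfold herzAssocNormC
  refine le_trans ?_ (le_iSup₂_of_le γ hγm (le_iSup_of_le hγN le_rfl))
  refine lintegral_mono fun x => ?_
  rw [nnnorm_mul, ENNReal.coe_mul, hγ]
  gcongr
  exact le_mul_of_one_le_left' (ENNReal.one_le_inv.2 hc1)

/-- the associate space of `Ė^{α,p}_q(ℝⁿ)` is `Ė^{-α,p'}_{q'}(ℝⁿ)`. -/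
theorem mixedHerz_assoc (n : ℕ) (α : Fin n → ℝ) (p q p' q' : Fin n → ℝ≥0∞)
    (hp : ∀ i, 1 ≤ p i) (hq : ∀ i, 1 ≤ q i)
    (hp' : ∀ i, 1 / p i + 1 / p' i = 1) (hq' : ∀ i, 1 / q i + 1 / q' i = 1)
    (f : (Fin n → ℝ) → ℂ) (hf : Measurable f) :
    (herzAssocNormC n α p q f ≠ ∞ ↔ herzNormC n (-α) p' q' f ≠ ∞) ∧
    herzAssocNormC n α p q f = herzNormC n (-α) p' q' f := by
  have D := mixed_dual n α p q p' q' hp hq hp' hq'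
  have key : herzAssocNormC n α p q f = herzNormC n (-α) p' q' f := by
    refine le_antisymm ?_ (mixed_le_assoc n α p q p' q' D f hf)
    unfold herzAssocNormC
    refine iSup_le fun g => iSup_le fun hg => iSup_le fun h1 => ?_
    have hf' : Measurable fun x => (‖f x‖₊ : ℝ≥0∞) := by fun_prop
    have hg' : Measurable fun x => (‖g x‖₊ : ℝ≥0∞) := by fun_prop
    have := D.holder _ _ hf' hg'
    simp only [nnnorm_mul, ENNReal.coe_mul]
    refine this.trans_eq ?_
    change _ * herzNormC n α p q g = _
    rw [h1, mul_one]
    rfl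
  exact ⟨by rw [key], key⟩
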